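/- Let (M,E,η) be a factorable monoid. Then the rewriting system associated with η is strongly minimal, the evaluation map E*/↔_R → M induced by sending each letter to itself is an isomorphism of monoids, and every ↔_R-equivalence class of words over E contains exactly one irreducible word. -/

import Mathlib

/-- The word length of `m` with respect to the generating set `E`:
the least `n` such that `m` is a product of `n` elements of `E`. -/
noncomputable def wordLength {M : Type*} [Monoid M] (E : Set M) (m : M) : ℕ :=
  sInf {n | ∃ l : List M, (∀ x ∈ l, x ∈ E) ∧ l.length = n ∧ l.prod = m}

/-- `E` is a generating set of the monoid `M`. -/
def IsGenSet {M : Type*} [Monoid M] (E : Set M) : Prop :=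
  ∀ m : M, ∃ l : List M, (∀ x ∈ l, x ∈ E) ∧ l.prod = m

/-- The pair `(a, b)` is geodesic with respect to `E`. -/
noncomputable def Geodesic {M : Type*} [Monoid M] (E : Set M) (a b : M) : Prop :=
  wordLength E (a * b) = wordLength E a + wordLength E b

/-- A factorization map `η = (η̄, η′)` on `(M, E)`. -/
noncomputable def IsFactorizationMap {M : Type*} [Monoid M] (E : Set M)
    (η : M → M × M) : Prop :=
  (∀ m, (η m).1 * (η m).2 = m) ∧
  (∀ m, wordLength E m = wordLength E (η m).1 + wordLength E (η m).2) ∧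
  (∀ m, m ≠ 1 → (η m).2 ∈ E) ∧
  η 1 = (1, 1)

/-- The map `f₁ : M³ → M³` applying `η` to the product of the two right entries,
with triples written `(x₃, x₂, x₁)`. -/
def f1 {M : Type*} [Monoid M] (η : M → M × M) (p : M × M × M) : M × M × M :=
  (p.1, η (p.2.1 * p.2.2))

/-- The map `f₂ : M³ → M³` applying `η` to the product of the two left entries. -/
def f2 {M : Type*} [Monoid M] (η : M → M × M) (p : M × M × M) : M × M × M :=
  ((η (p.1 * p.2.1)).1, (η (p.1 * p.2.1)).2, p.2.2)

/-- The sum of the word lengths of the entries of a triple. -/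
noncomputable def tnorm {M : Type*} [Monoid M] (E : Set M) (p : M × M × M) : ℕ :=
  wordLength E p.1 + wordLength E p.2.1 + wordLength E p.2.2

/-- `η` is a factorability structure on `(M, E)`: it is a factorization map and the
three maps `f₁f₂f₁f₂`, `f₂f₁f₂`, `f₂f₁f₂f₁ : M³ → M³` are equal in the graded sense. -/
noncomputable def IsFactorable {M : Type*} [Monoid M] (E : Set M) (η : M → M × M) : Prop :=
  IsFactorizationMap E η ∧
  ∀ p : M × M × M,
    (f1 η (f2 η (f1 η (f2 η p))) = f2 η (f1 η (f2 η p)) ∧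
     f2 η (f1 η (f2 η p)) = f2 η (f1 η (f2 η (f1 η p)))) ∨
    (tnorm E (f1 η (f2 η (f1 η (f2 η p)))) < tnorm E p ∧
     tnorm E (f2 η (f1 η (f2 η p))) < tnorm E p ∧
     tnorm E (f2 η (f1 η (f2 η (f1 η p)))) < tnorm E p)

/-- `η` is a weak factorability structure on `(M, E)`. -/
noncomputable def IsWeaklyFactorable {M : Type*} [Monoid M] (E : Set M)
    (η : M → M × M) : Prop :=
  IsFactorizationMap E η ∧
  ∀ x : M, ∀ t ∈ E,
    Geodesic E (η x).2 t →
    Geodesic E (η x).1 (η ((η x).2 * t)).1 →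
    Geodesic E x t ∧
    (η (x * t)).2 = (η ((η x).2 * t)).2 ∧
    (η (x * t)).1 = (η x).1 * (η ((η x).2 * t)).1

/-- `η` satisfies the recognition principle. -/
def RecognitionPrinciple {M : Type*} [Monoid M] (E : Set M) (η : M → M × M) : Prop :=
  ∀ m : M, ∀ a ∈ E, (η (m * a) = (m, a) ↔ η ((η m).2 * a) = ((η m).2, a))


attribute [local instance] Classical.propDecidable

/-- The right-hand side of the rewriting rule associated with the unstable pair `(x, y)`:
the word obtained from the pair `(η̄(x·y), η′(x·y))` by deleting entries equal to `1`. -/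
noncomputable def ruleRHS {M : Type*} [Monoid M] (η : M → M × M) (x y : M) : List M :=
  (if (η (x * y)).1 = 1 then [] else [(η (x * y)).1]) ++
  (if (η (x * y)).2 = 1 then [] else [(η (x * y)).2])

/-- One rewriting step of the rewriting system associated with the factorability
structure `η` on `(M, E)`: some occurrence of an unstable pair `(x, y)` of generators is
replaced by the corresponding right-hand side. -/
noncomputable def Step {M : Type*} [Monoid M] (E : Set M) (η : M → M × M)
    (w z : List M) : Prop :=
  ∃ (u v : List M) (x y : M), x ∈ E ∧ y ∈ E ∧ η (x * y) ≠ (x, y) ∧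
    w = u ++ [x, y] ++ v ∧ z = u ++ ruleRHS η x y ++ v

/-- A word is irreducible if no rewriting rule applies to it. -/
noncomputable def Irr {M : Type*} [Monoid M] (E : Set M) (η : M → M × M)
    (w : List M) : Prop :=
  ¬ ∃ z, Step E η w z

/-- The rewriting system associated with `η` is strongly minimal: every single letter is
irreducible, the right side of every rule is irreducible, and the left side of every
rule is irreducible with respect to the remaining rules. -/
noncomputable def StronglyMinimal {M : Type*} [Monoid M] (E : Set M)
    (η : M → M × M) : Prop :=
  (∀ s ∈ E, Irr E η [s]) ∧
  (∀ x ∈ E, ∀ y ∈ E, η (x * y) ≠ (x, y) → Irr E η (ruleRHS η x y)) ∧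
  (∀ x ∈ E, ∀ y ∈ E, η (x * y) ≠ (x, y) →
    ¬ ∃ (u v : List M) (x' y' : M), x' ∈ E ∧ y' ∈ E ∧ η (x' * y') ≠ (x', y') ∧
        (x', y') ≠ (x, y) ∧ [x, y] = u ++ [x', y'] ++ v)

/-- The rewriting system associated with `η` is noetherian: there is no infinite chain
of rewriting steps between words over the alphabet `E`. -/
noncomputable def Noetherian {M : Type*} [Monoid M] (E : Set M)
    (η : M → M × M) : Prop :=
  ¬ ∃ f : ℕ → List M, (∀ k, ∀ a ∈ f k, a ∈ E) ∧ ∀ k, Step E η (f k) (f (k + 1))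

/-- The rewriting system associated with `η` is convergent: it is noetherian and each
`↔`-equivalence class of words over `E` contains exactly one irreducible word. -/
noncomputable def Convergent {M : Type*} [Monoid M] (E : Set M)
    (η : M → M × M) : Prop :=
  Noetherian E η ∧
  ∀ w : List M, (∀ a ∈ w, a ∈ E) →
    ∃! z : List M, (∀ a ∈ z, a ∈ E) ∧ Relation.EqvGen (Step E η) w z ∧ Irr E η z

/-- The rewriting system associated with `η` is complete. -/
noncomputable def Complete {M : Type*} [Monoid M] (E : Set M) (η : M → M × M) : Prop :=
  StronglyMinimal E η ∧ Convergent E η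

/-!
The graded identity enters only through two consequences, weak factorability and the recognition
principle. A word over `E` is irreducible iff all its adjacent pairs are stable; by the recognition
principle this means that `η` strips its letters off the product one by one, so an irreducible
word is determined by its value in `M`. The remaining point is that every word is equivalent to an
irreducible one. For this one absorbs a letter `t` into an irreducible word `v ++ [d]` by induction
on the length: replace `d, t` by `a, b = η(d * t)`, without the entries equal to `1`, and absorb
`a` into `v`. If the resulting word is no longer than `v`, absorb `b` into it by induction;
otherwise the pairs `(d, t)` and `(v.prod, a)` are geodesic, and weak factorability says that
appending `b` already gives an irreducible word.
-/

section WordLength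

variable {M : Type*} [Monoid M] {E : Set M}

theorem wordLength_prod_le {l : List M} (hl : ∀ x ∈ l, x ∈ E) : wordLength E l.prod ≤ l.length :=
  Nat.sInf_le ⟨l, hl, rfl, rfl⟩

theorem exists_length_eq_wordLength (hgen : IsGenSet E) (m : M) :
    ∃ l : List M, (∀ x ∈ l, x ∈ E) ∧ l.length = wordLength E m ∧ l.prod = m := by
  obtain ⟨l, hl, hprod⟩ := hgen m
  exact Nat.sInf_mem (s := {n | ∃ l : List M, (∀ x ∈ l, x ∈ E) ∧ l.length = n ∧ l.prod = m})
    ⟨l.length, l, hl, rfl, hprod⟩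

theorem wordLength_one : wordLength E (1 : M) = 0 :=
  Nat.le_zero.1 (wordLength_prod_le (l := []) (by simp))

theorem wordLength_eq_zero_iff (hgen : IsGenSet E) {m : M} : wordLength E m = 0 ↔ m = 1 := by
  refine ⟨fun h => ?_, fun h => h ▸ wordLength_one⟩
  obtain ⟨l, -, hlen, rfl⟩ := exists_length_eq_wordLength hgen m
  rw [List.eq_nil_of_length_eq_zero (hlen.trans h), List.prod_nil]

theorem wordLength_eq_one_iff (h1 : (1 : M) ∉ E) {a : M} : wordLength E a = 1 ↔ a ∈ E := by
  refine ⟨fun h => ?_, fun ha => le_antisymm ?_ (le_csInf ⟨1, [a], by simpa⟩ ?_)⟩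
  · obtain ⟨l, hl, hlen, rfl⟩ := Nat.sInf_mem (Nat.nonempty_of_sInf_eq_succ h)
    obtain ⟨x, rfl⟩ := List.length_eq_one_iff.1 (hlen.trans h)
    simpa using hl
  · simpa using wordLength_prod_le (l := [a]) (by simpa)
  · rintro - ⟨l, -, rfl, rfl⟩
    refine List.length_pos_iff.2 ?_
    rintro rfl
    exact h1 ha

theorem wordLength_mul_le (hgen : IsGenSet E) (a b : M) :
    wordLength E (a * b) ≤ wordLength E a + wordLength E b := by
  obtain ⟨k, hk, hklen, rfl⟩ := exists_length_eq_wordLength hgen a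
  obtain ⟨l, hl, hllen, rfl⟩ := exists_length_eq_wordLength hgen b
  rw [← hklen, ← hllen, ← List.prod_append, ← List.length_append]
  exact wordLength_prod_le fun x hx => (List.mem_append.1 hx).elim (hk x) (hl x)

theorem geodesic_assoc (hgen : IsGenSet E) {a b c : M} :
    Geodesic E a b ∧ Geodesic E (a * b) c ↔ Geodesic E b c ∧ Geodesic E a (b * c) := by
  have hab := wordLength_mul_le hgen a b
  have hbc := wordLength_mul_le hgen b c
  have hab_c := wordLength_mul_le hgen (a * b) c
  have ha_bc := wordLength_mul_le hgen a (b * c)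
  simp only [Geodesic, mul_assoc] at *
  omega

end WordLength

/-- `(a, b)` is a stable pair with respect to `η`: the left sides of the rewriting rules are the
pairs of generators that are not stable. -/
def Stable {M : Type*} [Monoid M] (η : M → M × M) (a b : M) : Prop :=
  η (a * b) = (a, b)

section Factorization

variable {M : Type*} [Monoid M] {E : Set M} {η : M → M × M}

theorem stable_fst_snd (hmul : ∀ m, (η m).1 * (η m).2 = m) (m : M) :
    Stable η (η m).1 (η m).2 := by
  rw [Stable, hmul]

theorem Stable.geodesic (hη : IsFactorizationMap E η) {a b : M} (h : Stable η a b) :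
    Geodesic E a b := by
  have hlen := hη.2.1 (a * b)
  rwa [h] at hlen

theorem IsFactorizationMap.apply_of_mem (hη : IsFactorizationMap E η) (h1 : (1 : M) ∉ E)
    (hgen : IsGenSet E) {a : M} (ha : a ∈ E) : η a = (1, a) := by
  have hsnd : (η a).2 ∈ E := hη.2.2.1 a (ne_of_mem_of_not_mem ha h1)
  have hlen := hη.2.1 a
  rw [(wordLength_eq_one_iff h1).2 ha, (wordLength_eq_one_iff h1).2 hsnd] at hlen
  have hfst : (η a).1 = 1 := (wordLength_eq_zero_iff hgen).1 (by omega)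
  exact Prod.ext hfst (by simpa [hfst] using hη.1 a)

theorem IsFactorizationMap.apply_snd (hη : IsFactorizationMap E η) (h1 : (1 : M) ∉ E)
    (hgen : IsGenSet E) (m : M) : η (η m).2 = (1, (η m).2) := by
  rcases eq_or_ne m 1 with rfl | hm
  · simp only [hη.2.2.2]
  · exact hη.apply_of_mem h1 hgen (hη.2.2.1 m hm)

theorem IsFactorizationMap.fst_mem_of_wordLength_le_two (hη : IsFactorizationMap E η)
    (h1 : (1 : M) ∉ E) (hgen : IsGenSet E) {m : M} (hm : wordLength E m ≤ 2)
    (hfst : (η m).1 ≠ 1) : (η m).1 ∈ E := by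
  have hm1 : m ≠ 1 := by
    rintro rfl
    simp [hη.2.2.2] at hfst
  have hsnd := (wordLength_eq_one_iff h1).2 (hη.2.2.1 m hm1)
  have hpos := (wordLength_eq_zero_iff hgen).not.2 hfst
  have hlen := hη.2.1 m
  exact (wordLength_eq_one_iff h1).1 (by omega)

theorem IsFactorable.stable_of_stable_snd (hfac : IsFactorable E η) (h1 : (1 : M) ∉ E)
    (hgen : IsGenSet E) {m b : M} (hb : Stable η (η m).2 b) : Stable η m b := by
  obtain ⟨hη, hgraded⟩ := hfac
  have hlen := hb.geodesic hη
  have hm := stable_fst_snd hη.1 m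
  unfold Geodesic at hlen
  unfold Stable at hb hm
  -- `f₁` sends this triple to `(η̄(m), η′(m), b)`, which both `f₁` and `f₂` fix.
  rcases hgraded ((η m).1, (η m).2 * b, 1) with ⟨-, h⟩ | ⟨-, -, h⟩
  · simp only [f1, f2, mul_one, hb, ← mul_assoc, hη.1, hη.apply_snd h1 hgen,
      Prod.mk.injEq] at h
    obtain ⟨hfst, hfst', hsnd⟩ := h
    refine Prod.ext ?_ hsnd
    calc (η (m * b)).1 = (η (η (m * b)).1).1 * (η (η (m * b)).1).2 := (hη.1 _).symm
      _ = (η m).1 * (η m).2 := by rw [hfst, hfst']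
      _ = m := hη.1 m
  · simp only [f1, f2, tnorm, mul_one, hm, hb, wordLength_one] at h
    omega

theorem IsFactorable.isWeaklyFactorable (hfac : IsFactorable E η) (h1 : (1 : M) ∉ E)
    (hgen : IsGenSet E) : IsWeaklyFactorable E η := by
  obtain ⟨hη, hgraded⟩ := id hfac
  refine ⟨hη, fun x t _ hdt hca => ?_⟩
  set a := (η ((η x).2 * t)).1 with ha
  set b := (η ((η x).2 * t)).2 with hb
  have hab : a * b = (η x).2 * t := hη.1 _
  have hprod : (η x).1 * a * b = x * t := by rw [mul_assoc, hab, ← mul_assoc, hη.1]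
  have hlen : wordLength E ((η x).2 * t) = wordLength E a + wordLength E b := hη.2.1 _
  have hstable : Stable η ((η x).1 * a) b := by
    refine hfac.stable_of_stable_snd h1 hgen ?_
    rcases hgraded ((η x).1, (η x).2, t) with ⟨h, -⟩ | ⟨-, h, -⟩
    · simp only [f1, f2, hη.1, Prod.mk.injEq, ← ha, ← hb] at h
      exact h.2
    · have hlen' := hη.2.1 ((η x).1 * a)
      simp only [f1, f2, tnorm, hη.1, ← ha, ← hb] at h
      unfold Geodesic at hdt hca
      omega
  have hgeo : Geodesic E ((η x).1 * (η x).2) t :=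
    ((geodesic_assoc hgen).2
      ⟨hdt, hab ▸ ((geodesic_assoc hgen).1 ⟨hca, hstable.geodesic hη⟩).2⟩).2
  rw [Stable, hprod] at hstable
  exact ⟨hη.1 x ▸ hgeo, by rw [hstable], by rw [hstable]⟩

theorem IsFactorable.stable_snd (hfac : IsFactorable E η) (h1 : (1 : M) ∉ E) (hgen : IsGenSet E)
    {m b : M} (hbE : b ∈ E) (hb : Stable η m b) : Stable η (η m).2 b := by
  obtain ⟨hη, hgraded⟩ := id hfac
  have hm := stable_fst_snd hη.1 m
  obtain ⟨hdb, hcdb⟩ := (geodesic_assoc hgen).1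
    ⟨hm.geodesic hη, (hη.1 m).symm ▸ hb.geodesic hη⟩
  have hca : Geodesic E (η m).1 (η ((η m).2 * b)).1 :=
    ((geodesic_assoc hgen).2
      ⟨(stable_fst_snd hη.1 ((η m).2 * b)).geodesic hη, (hη.1 _).symm ▸ hcdb⟩).1
  obtain ⟨-, hsnd, hfst⟩ := (hfac.isWeaklyFactorable h1 hgen).2 m b hbE hdb hca
  rw [hb] at hsnd hfst
  dsimp only at hsnd hfst
  -- Hence `f₂f₁f₂` fixes the triple `(η̄(m), η′(m), b)`, and then so does `f₁`.
  rcases hgraded ((η m).1, (η m).2, b) with ⟨h, -⟩ | ⟨-, h, -⟩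
  · simpa only [Stable, f1, f2, hη.1, ← hfst, ← hsnd, Prod.mk.injEq, true_and] using h
  · simp [f1, f2, hη.1, ← hfst, ← hsnd] at h

theorem IsFactorable.recognitionPrinciple (hfac : IsFactorable E η) (h1 : (1 : M) ∉ E)
    (hgen : IsGenSet E) : RecognitionPrinciple E η :=
  fun _ _ ha => ⟨hfac.stable_snd h1 hgen ha, hfac.stable_of_stable_snd h1 hgen⟩

theorem IsWeaklyFactorable.stable_mul (hweak : IsWeaklyFactorable E η) {c d t : M}
    (hcd : Stable η c d) (ht : t ∈ E) (hdt : Geodesic E d t)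
    (hc : Geodesic E c (η (d * t)).1) : Stable η (c * (η (d * t)).1) (η (d * t)).2 := by
  unfold Stable at hcd ⊢
  have h := hweak.2 (c * d) t ht
  rw [hcd] at h
  obtain ⟨-, hsnd, hfst⟩ := h hdt hc
  rw [mul_assoc, hweak.1.1, ← mul_assoc]
  exact Prod.ext hfst hsnd

end Factorization

section Rewriting

variable {M : Type*} [Monoid M] {E : Set M} {η : M → M × M}

theorem irr_of_isChain {w : List M} (hw : w.IsChain (Stable η)) : Irr E η w := by
  rintro ⟨-, u, v, x, y, -, -, hxy, rfl, -⟩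
  exact hxy (List.isChain_iff_forall_rel_of_append_cons_cons.1 hw
    (l₁ := u) (l₂ := v) (by simp))

theorem Irr.isChain {w : List M} (hwE : ∀ a ∈ w, a ∈ E) (hw : Irr E η w) :
    w.IsChain (Stable η) := by
  rw [List.isChain_iff_forall_rel_of_append_cons_cons]
  rintro x y u v rfl
  by_contra hxy
  exact hw ⟨_, u, v, x, y, hwE x (by simp), hwE y (by simp), hxy, by simp, rfl⟩

theorem isChain_ruleRHS (hmul : ∀ m, (η m).1 * (η m).2 = m) (x y : M) :
    (ruleRHS η x y).IsChain (Stable η) := by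
  unfold ruleRHS
  split_ifs <;> simp [stable_fst_snd hmul]

theorem stronglyMinimal_of_fst_mul_snd (hmul : ∀ m, (η m).1 * (η m).2 = m) :
    StronglyMinimal E η := by
  refine ⟨fun s _ => irr_of_isChain (.singleton s),
    fun x _ y _ _ => irr_of_isChain (isChain_ruleRHS hmul x y), ?_⟩
  rintro x - y - - ⟨u, v, x', y', -, -, -, hne, h⟩
  have heq : [x', y'] = [x, y] := List.IsInfix.eq_of_length ⟨u, v, h.symm⟩ rfl
  exact hne (by simpa using heq)

theorem prod_ruleRHS (hmul : ∀ m, (η m).1 * (η m).2 = m) (x y : M) :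
    (ruleRHS η x y).prod = x * y := by
  conv_rhs => rw [← hmul (x * y)]
  unfold ruleRHS
  split_ifs <;> simp_all

theorem ruleRHS_cases (hη : IsFactorizationMap E η) (h1 : (1 : M) ∉ E) (hgen : IsGenSet E)
    {x y : M} (hx : x ∈ E) (hy : y ∈ E) :
    ruleRHS η x y = [] ∨ (∃ b ∈ E, ruleRHS η x y = [b]) ∨
      (η (x * y)).1 ∈ E ∧ (η (x * y)).2 ∈ E ∧
        ruleRHS η x y = [(η (x * y)).1, (η (x * y)).2] := by
  by_cases hxy : x * y = 1
  · exact .inl (by simp [ruleRHS, hxy, hη.2.2.2])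
  have hsnd : (η (x * y)).2 ∈ E := hη.2.2.1 _ hxy
  have hsnd1 := ne_of_mem_of_not_mem hsnd h1
  by_cases hfst1 : (η (x * y)).1 = 1
  · exact .inr (.inl ⟨_, hsnd, by simp [ruleRHS, hfst1, hsnd1]⟩)
  have hlen := wordLength_mul_le hgen x y
  rw [(wordLength_eq_one_iff h1).2 hx, (wordLength_eq_one_iff h1).2 hy] at hlen
  exact .inr (.inr ⟨hη.fst_mem_of_wordLength_le_two h1 hgen hlen hfst1, hsnd,
    by simp [ruleRHS, hfst1, hsnd1]⟩)

theorem Step.prod_eq (hmul : ∀ m, (η m).1 * (η m).2 = m) {w z : List M} (h : Step E η w z) :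
    w.prod = z.prod := by
  obtain ⟨u, v, x, y, -, -, -, rfl, rfl⟩ := h
  simp [prod_ruleRHS hmul, mul_assoc]

theorem prod_eq_of_eqvGen_step (hmul : ∀ m, (η m).1 * (η m).2 = m) {w z : List M}
    (h : Relation.EqvGen (Step E η) w z) : w.prod = z.prod :=
  (Setoid.ker List.prod).iseqv.eqvGen_iff.1
    (Relation.EqvGen.mono (fun _ _ hstep => hstep.prod_eq hmul) _ _ h)

theorem eqvGen_step_append_right {w z : List M} (h : Relation.EqvGen (Step E η) w z)
    (s : List M) : Relation.EqvGen (Step E η) (w ++ s) (z ++ s) := by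
  induction h with
  | rel _ _ h =>
    obtain ⟨u, v, x, y, hx, hy, hxy, rfl, rfl⟩ := h
    exact .rel _ _ ⟨u, v ++ s, x, y, hx, hy, hxy, by simp, by simp⟩
  | refl => exact .refl _
  | symm _ _ _ ih => exact .symm _ _ ih
  | trans _ _ _ _ _ ih ih' => exact .trans _ _ _ ih ih'

end Rewriting

/-- A normal form is a word over `E` that is irreducible for the rewriting system associated
with `η`. -/
def IsNormalForm {M : Type*} [Monoid M] (E : Set M) (η : M → M × M) (w : List M) : Prop :=
  (∀ a ∈ w, a ∈ E) ∧ Irr E η w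

section NormalForm

variable {M : Type*} [Monoid M] {E : Set M} {η : M → M × M}

theorem isNormalForm_iff_isChain {w : List M} :
    IsNormalForm E η w ↔ (∀ a ∈ w, a ∈ E) ∧ w.IsChain (Stable η) :=
  and_congr_right fun hw => ⟨Irr.isChain hw, irr_of_isChain⟩

theorem isNormalForm_nil : IsNormalForm E η [] := by
  simp [isNormalForm_iff_isChain]

theorem isNormalForm_singleton {a : M} : IsNormalForm E η [a] ↔ a ∈ E := by
  simp [isNormalForm_iff_isChain]

theorem isNormalForm_append_pair {w : List M} {x y : M} :
    IsNormalForm E η (w ++ [x] ++ [y]) ↔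
      IsNormalForm E η (w ++ [x]) ∧ y ∈ E ∧ Stable η x y := by
  simp only [isNormalForm_iff_isChain, List.isChain_append (l₂ := [y]), List.forall_mem_append,
    List.forall_mem_singleton, List.getLast?_concat, List.head?_cons, Option.mem_some_iff,
    List.isChain_singleton]
  grind

theorem isNormalForm_append_singleton (hη : IsFactorizationMap E η)
    (hrec : RecognitionPrinciple E η) (h1 : (1 : M) ∉ E) (hgen : IsGenSet E)
    {w : List M} {a : M} :
    IsNormalForm E η (w ++ [a]) ↔ IsNormalForm E η w ∧ a ∈ E ∧ Stable η w.prod a := by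
  induction w using List.reverseRecOn generalizing a with
  | nil =>
    simp only [List.nil_append, isNormalForm_singleton, isNormalForm_nil, true_and, Stable,
      List.prod_nil, one_mul]
    exact ⟨fun ha => ⟨ha, hη.apply_of_mem h1 hgen ha⟩, And.left⟩
  | append_singleton v d ih =>
    rw [isNormalForm_append_pair]
    refine and_congr_right fun hv => and_congr_right fun ha => ?_
    have hvd : η (v ++ [d]).prod = (v.prod, d) := by
      simpa [Stable] using (ih.1 hv).2.2
    have hrec_vd := hrec (v ++ [d]).prod a ha
    rw [hvd] at hrec_vd
    exact hrec_vd.symm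

theorem IsNormalForm.wordLength_prod (hη : IsFactorizationMap E η)
    (hrec : RecognitionPrinciple E η) (h1 : (1 : M) ∉ E) (hgen : IsGenSet E) {w : List M}
    (hw : IsNormalForm E η w) : wordLength E w.prod = w.length := by
  induction w using List.reverseRecOn with
  | nil => exact wordLength_one
  | append_singleton v a ih =>
    obtain ⟨hv, ha, hva⟩ := (isNormalForm_append_singleton hη hrec h1 hgen).1 hw
    rw [List.prod_append, List.prod_singleton, hva.geodesic hη, ih hv,
      (wordLength_eq_one_iff h1).2 ha, List.length_append, List.length_singleton]

theorem IsNormalForm.eq_of_prod_eq (hη : IsFactorizationMap E η)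
    (hrec : RecognitionPrinciple E η) (h1 : (1 : M) ∉ E) (hgen : IsGenSet E) {w z : List M}
    (hw : IsNormalForm E η w) (hz : IsNormalForm E η z) (hprod : w.prod = z.prod) : w = z := by
  have hlen : w.length = z.length := by
    rw [← hw.wordLength_prod hη hrec h1 hgen, hprod, hz.wordLength_prod hη hrec h1 hgen]
  induction w using List.reverseRecOn generalizing z with
  | nil => exact (List.eq_nil_of_length_eq_zero hlen.symm).symm
  | append_singleton w a ih =>
    rcases List.eq_nil_or_concat' z with rfl | ⟨z, b, rfl⟩
    · simp at hlen
    obtain ⟨hw', -, hwa⟩ := (isNormalForm_append_singleton hη hrec h1 hgen).1 hw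
    obtain ⟨hz', -, hzb⟩ := (isNormalForm_append_singleton hη hrec h1 hgen).1 hz
    simp only [List.prod_append, List.prod_singleton] at hprod
    rw [Stable, hprod, hzb, Prod.mk.injEq] at hwa
    rw [ih hw' hz' hwa.1.symm (by simpa using hlen), hwa.2]

theorem IsNormalForm.length_le (hη : IsFactorizationMap E η) (hrec : RecognitionPrinciple E η)
    (h1 : (1 : M) ∉ E) (hgen : IsGenSet E) {w z : List M} (hz : IsNormalForm E η z)
    (hw : ∀ a ∈ w, a ∈ E) (hprod : z.prod = w.prod) : z.length ≤ w.length := by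
  rw [← hz.wordLength_prod hη hrec h1 hgen, hprod]
  exact wordLength_prod_le hw

theorem IsNormalForm.append_snd_of_length_eq (hweak : IsWeaklyFactorable E η)
    (hrec : RecognitionPrinciple E η) (h1 : (1 : M) ∉ E) (hgen : IsGenSet E) {v s : List M}
    {d t : M} (hvd : IsNormalForm E η (v ++ [d])) (ht : t ∈ E) (ha : (η (d * t)).1 ∈ E)
    (hb : (η (d * t)).2 ∈ E) (hs : IsNormalForm E η s)
    (hprod : s.prod = v.prod * (η (d * t)).1) (hlen : s.length = v.length + 1) :
    IsNormalForm E η (s ++ [(η (d * t)).2]) := by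
  have hη := hweak.1
  obtain ⟨hv, hd, hstable⟩ := (isNormalForm_append_singleton hη hrec h1 hgen).1 hvd
  have hdt : Geodesic E d t := by
    rw [Geodesic, hη.2.1]
    simp only [(wordLength_eq_one_iff h1).2, ha, hb, hd, ht]
  have hva : Geodesic E v.prod (η (d * t)).1 := by
    rw [Geodesic, ← hprod, hs.wordLength_prod hη hrec h1 hgen,
      hv.wordLength_prod hη hrec h1 hgen, (wordLength_eq_one_iff h1).2 ha, hlen]
  exact (isNormalForm_append_singleton hη hrec h1 hgen).2
    ⟨hs, hb, hprod ▸ hweak.stable_mul hstable ht hdt hva⟩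

theorem exists_isNormalForm_eqvGen_append_singleton (hweak : IsWeaklyFactorable E η)
    (hrec : RecognitionPrinciple E η) (h1 : (1 : M) ∉ E) (hgen : IsGenSet E) {w : List M} {t : M}
    (hw : IsNormalForm E η w) (ht : t ∈ E) :
    ∃ z, IsNormalForm E η z ∧ Relation.EqvGen (Step E η) (w ++ [t]) z := by
  have hη := hweak.1
  induction hn : w.length using Nat.strong_induction_on generalizing w t with
  | _ n ih =>
  rcases List.eq_nil_or_concat' w with rfl | ⟨v, d, rfl⟩
  · exact ⟨[t], isNormalForm_singleton.2 ht, .refl _⟩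
  by_cases hdt : Stable η d t
  · exact ⟨_, isNormalForm_append_pair.2 ⟨hw, ht, hdt⟩, .refl _⟩
  obtain ⟨hv, hd, -⟩ := (isNormalForm_append_singleton hη hrec h1 hgen).1 hw
  rw [List.length_append, List.length_singleton] at hn
  have hstep : Relation.EqvGen (Step E η) (v ++ [d] ++ [t]) (v ++ ruleRHS η d t) :=
    .rel _ _ ⟨v, [], d, t, hd, ht, hdt, by simp, by simp⟩
  rcases ruleRHS_cases hη h1 hgen hd ht with hrhs | ⟨b, hb, hrhs⟩ | ⟨ha, hb, hrhs⟩
  · exact ⟨v, hv, by simpa [hrhs] using hstep⟩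
  · obtain ⟨z, hz, hvz⟩ := ih v.length (by omega) hv hb rfl
    exact ⟨z, hz, .trans _ _ _ (hrhs ▸ hstep) hvz⟩
  obtain ⟨s, hs, hvs⟩ := ih v.length (by omega) hv ha rfl
  have hstep_s : Relation.EqvGen (Step E η) (v ++ [d] ++ [t]) (s ++ [(η (d * t)).2]) :=
    .trans _ _ _ hstep (by simpa [hrhs] using eqvGen_step_append_right hvs [(η (d * t)).2])
  have hs_prod : s.prod = (v ++ [(η (d * t)).1]).prod :=
    (prod_eq_of_eqvGen_step hη.1 hvs).symm
  have hs_le : s.length ≤ n := by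
    rw [← hn]
    simpa using hs.length_le hη hrec h1 hgen
      (List.forall_mem_append.2 ⟨hv.1, List.forall_mem_singleton.2 ha⟩) hs_prod
  rcases hs_le.lt_or_eq with hlt | heq
  · obtain ⟨z, hz, hsz⟩ := ih s.length hlt hs hb rfl
    exact ⟨z, hz, .trans _ _ _ hstep_s hsz⟩
  · exact ⟨_, hw.append_snd_of_length_eq hweak hrec h1 hgen ht ha hb hs
      (by simpa using hs_prod) (heq.trans hn.symm), hstep_s⟩

theorem exists_isNormalForm_eqvGen (hweak : IsWeaklyFactorable E η)
    (hrec : RecognitionPrinciple E η) (h1 : (1 : M) ∉ E) (hgen : IsGenSet E) {w : List M}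
    (hw : ∀ a ∈ w, a ∈ E) : ∃ z, IsNormalForm E η z ∧ Relation.EqvGen (Step E η) w z := by
  induction w using List.reverseRecOn with
  | nil => exact ⟨[], isNormalForm_nil, .refl _⟩
  | append_singleton v t ih =>
    obtain ⟨hv, ht⟩ := List.forall_mem_append.1 hw
    obtain ⟨s, hs, hvs⟩ := ih hv
    obtain ⟨z, hz, hsz⟩ := exists_isNormalForm_eqvGen_append_singleton hweak hrec h1 hgen hs
      (List.forall_mem_singleton.1 ht)
    exact ⟨z, hz, .trans _ _ _ (eqvGen_step_append_right hvs [t]) hsz⟩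

theorem eqvGen_step_iff_prod_eq (hweak : IsWeaklyFactorable E η)
    (hrec : RecognitionPrinciple E η) (h1 : (1 : M) ∉ E) (hgen : IsGenSet E) {w z : List M}
    (hw : ∀ a ∈ w, a ∈ E) (hz : ∀ a ∈ z, a ∈ E) :
    Relation.EqvGen (Step E η) w z ↔ w.prod = z.prod := by
  have hmul := hweak.1.1
  refine ⟨prod_eq_of_eqvGen_step hmul, fun h => ?_⟩
  obtain ⟨w', hw', hww'⟩ := exists_isNormalForm_eqvGen hweak hrec h1 hgen hw
  obtain ⟨z', hz', hzz'⟩ := exists_isNormalForm_eqvGen hweak hrec h1 hgen hz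
  obtain rfl : w' = z' := hw'.eq_of_prod_eq hweak.1 hrec h1 hgen hz' <| by
    rw [← prod_eq_of_eqvGen_step hmul hww', h, prod_eq_of_eqvGen_step hmul hzz']
  exact .trans _ _ _ hww' (.symm _ _ hzz')

end NormalForm

/-- Let `(M, E, η)` be a factorable monoid. Then the rewriting system associated with
`η` is strongly minimal, the evaluation map `E*/↔_R → M` (induced by sending each letter
to itself) is an isomorphism of monoids — i.e. two words over `E` are `↔_R`-equivalent
iff they evaluate to the same element of `M`, and every element of `M` is the value of
some word over `E` — and every `↔_R`-equivalence class of words over `E` contains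
exactly one irreducible word. -/
theorem rewritingSystem_of_factorable
    {M : Type*} [Monoid M] (E : Set M) (h1 : (1 : M) ∉ E) (hgen : IsGenSet E)
    (η : M → M × M) (hfac : IsFactorable E η) :
    StronglyMinimal E η ∧
    (∀ w z : List M, (∀ a ∈ w, a ∈ E) → (∀ a ∈ z, a ∈ E) →
      (Relation.EqvGen (Step E η) w z ↔ w.prod = z.prod)) ∧
    (∀ m : M, ∃ w : List M, (∀ a ∈ w, a ∈ E) ∧ w.prod = m) ∧
    (∀ w : List M, (∀ a ∈ w, a ∈ E) →
      ∃! z : List M, (∀ a ∈ z, a ∈ E) ∧ Relation.EqvGen (Step E η) w z ∧ Irr E η z) := by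
  have hη := hfac.1
  have hweak := hfac.isWeaklyFactorable h1 hgen
  have hrec := hfac.recognitionPrinciple h1 hgen
  refine ⟨stronglyMinimal_of_fst_mul_snd hη.1,
    fun w z hw hz => eqvGen_step_iff_prod_eq hweak hrec h1 hgen hw hz, hgen, fun w hw => ?_⟩
  obtain ⟨z, hz, hwz⟩ := exists_isNormalForm_eqvGen hweak hrec h1 hgen hw
  refine ⟨z, ⟨hz.1, hwz, hz.2⟩, fun s ⟨hsE, hws, hs⟩ => ?_⟩
  refine IsNormalForm.eq_of_prod_eq hη hrec h1 hgen ⟨hsE, hs⟩ hz ?_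
  rw [← prod_eq_of_eqvGen_step hη.1 hws, prod_eq_of_eqvGen_step hη.1 hwz]
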